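/- The open interval (√66045/79, (190+4√30)/65) is a gap of the Markov spectrum: M ∩ (√66045/79, (190+4√30)/65) = ∅, while both endpoints √66045/79 and (190+4√30)/65 belong to M. -/

import Mathlib

open Filter Set MeasureTheory
open scoped ENNReal

/-- Finite continued fraction `[a 0; a 1, ..., a n]`. -/
noncomputable def cfConv : (ℕ → ℝ) → ℕ → ℝ
  | a, 0 => a 0
  | a, n + 1 => a 0 + 1 / cfConv (fun i => a (i + 1)) n

/-- Value of the infinite continued fraction `[a 0; a 1, a 2, ...]`,
as the limit of its convergents. -/
noncomputable def cfVal (a : ℕ → ℝ) : ℝ := limUnder atTop (cfConv a)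

/-- `λ_k(α) = [α_k; α_{k+1}, ...] + [0; α_{k-1}, α_{k-2}, ...]`. -/
noncomputable def lambdaVal (α : ℤ → ℕ) (k : ℤ) : ℝ :=
  cfVal (fun n => (α (k + n) : ℝ)) +
  cfVal (fun n => if n = 0 then 0 else (α (k - n) : ℝ))

/-- The Markov value `m(α) = sup_{k ∈ ℤ} λ_k(α)`. -/
noncomputable def markovValue (α : ℤ → ℕ) : ℝ := ⨆ k : ℤ, lambdaVal α k

/-- The Markov spectrum. -/
def markovSpectrum : Set ℝ :=
  { x | ∃ α : ℤ → ℕ, (∀ n, 0 < α n) ∧ BddAbove (range (lambdaVal α)) ∧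
      markovValue α = x }

/-- The dimension function `d(t) = dim_H (M ∩ (-∞, t))`. -/
noncomputable def dimFun (t : ℝ) : ℝ≥0∞ := dimH (markovSpectrum ∩ Iio t)


/-! ### Convergence of continued fractions -/

/-- Every convergent of a continued fraction with partial quotients at least `1` is at least `1`. -/
theorem one_le_cfConv (n : ℕ) : ∀ a : ℕ → ℝ, (∀ i, 1 ≤ a i) → 1 ≤ cfConv a n := by
  induction n with
  | zero => intro a ha; simpa [cfConv] using ha 0
  | succ n ih =>
    intro a ha
    have h := ih (fun i => a (i + 1)) (fun i => ha _)
    have h0 := ha 0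
    have : 0 < 1 / cfConv (fun i => a (i + 1)) n := by positivity
    simp only [cfConv]
    linarith

/-- Two steps of a continued fraction contract distances by the factor `1 / 4`. -/
theorem abs_one_div_add_sub_le {a x y : ℝ} (ha : 1 ≤ a) (hx : 1 ≤ x) (hy : 1 ≤ y) :
    |1 / (a + 1 / x) - 1 / (a + 1 / y)| ≤ |x - y| / 4 := by
  have hX : 2 ≤ a * x + 1 := by nlinarith
  have hY : 2 ≤ a * y + 1 := by nlinarith
  have e : 1 / (a + 1 / x) - 1 / (a + 1 / y) = (x - y) / ((a * x + 1) * (a * y + 1)) := by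
    have : a + 1 / x = (a * x + 1) / x := by field_simp
    rw [this]
    have : a + 1 / y = (a * y + 1) / y := by field_simp
    rw [this]
    field_simp
    ring
  rw [e, abs_div, abs_of_pos (by positivity : 0 < (a * x + 1) * (a * y + 1))]
  exact div_le_div_of_nonneg_left (abs_nonneg _) (by norm_num) (by nlinarith)

theorem abs_cfConv_sub_le (N : ℕ) : ∀ (a : ℕ → ℝ) (i j : ℕ), (∀ i, 1 ≤ a (i + 1)) →
    |cfConv a (2 * N + 2 + i) - cfConv a (2 * N + 2 + j)| ≤ (1 / 4) ^ N := by
  induction N with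
  | zero =>
    intro a i j ha
    have hb : ∀ m, 0 < 1 / cfConv (fun i => a (i + 1)) m ∧
        1 / cfConv (fun i => a (i + 1)) m ≤ 1 := fun m => by
      have := one_le_cfConv m (fun i => a (i + 1)) ha
      exact ⟨by positivity, by rw [div_le_one (by positivity)]; exact this⟩
    have e : ∀ m, cfConv a (2 * 0 + 2 + m) = a 0 + 1 / cfConv (fun i => a (i + 1)) (m + 1) := by
      intro m
      rw [show 2 * 0 + 2 + m = m + 1 + 1 by ring, cfConv]
    rw [e, e, pow_zero, abs_le]
    have h1 := hb (i + 1)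
    have h2 := hb (j + 1)
    constructor <;> linarith
  | succ N ih =>
    intro a i j ha
    have e : ∀ m, cfConv a (2 * (N + 1) + 2 + m) =
        a 0 + 1 / (a 1 + 1 / cfConv (fun i => a (i + 2)) (2 * N + 2 + m)) := by
      intro m
      rw [show 2 * (N + 1) + 2 + m = (2 * N + 2 + m) + 1 + 1 by ring, cfConv, cfConv]
    have h1 := fun m => one_le_cfConv m (fun i => a (i + 2)) (fun i => ha _)
    rw [e, e, add_sub_add_left_eq_sub, pow_succ]
    have h := ih (fun i => a (i + 2)) i j (fun i => ha _)
    have h2 := abs_one_div_add_sub_le (ha 0) (h1 (2 * N + 2 + i)) (h1 (2 * N + 2 + j))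
    simp only [zero_add] at h2
    linarith

/-- A continued fraction whose partial quotients after the first are at least `1` converges. -/
theorem tendsto_cfConv (a : ℕ → ℝ) (ha : ∀ i, 1 ≤ a (i + 1)) :
    Tendsto (cfConv a) atTop (nhds (cfVal a)) := by
  have hc : CauchySeq (cfConv a) := by
    rw [Metric.cauchySeq_iff]
    intro ε hε
    obtain ⟨N, hN⟩ := exists_pow_lt_of_lt_one hε (by norm_num : (1 / 4 : ℝ) < 1)
    refine ⟨2 * N + 2, fun m hm n hn => ?_⟩
    obtain ⟨i, rfl⟩ := Nat.exists_eq_add_of_le hm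
    obtain ⟨j, rfl⟩ := Nat.exists_eq_add_of_le hn
    rw [Real.dist_eq]
    exact (abs_cfConv_sub_le N a i j ha).trans_lt hN
  exact tendsto_nhds_limUnder (cauchySeq_tendsto_of_complete hc)

theorem one_le_cfVal (a : ℕ → ℝ) (ha : ∀ i, 1 ≤ a i) : 1 ≤ cfVal a :=
  ge_of_tendsto' (tendsto_cfConv a (fun _ => ha _)) (fun n => one_le_cfConv n a ha)

theorem cfVal_eq_add_one_div (a : ℕ → ℝ) (ha : ∀ i, 1 ≤ a (i + 1)) :
    cfVal a = a 0 + 1 / cfVal (fun i => a (i + 1)) := by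
  have h1 := (tendsto_cfConv a ha).comp (tendsto_add_atTop_nat 1)
  have h2 := tendsto_cfConv (fun i => a (i + 1)) (fun i => ha _)
  have h3 := one_le_cfVal (fun i => a (i + 1)) ha
  have h4 := (tendsto_const_nhds (x := (1 : ℝ)).div h2 (by positivity)).const_add (a 0)
  exact tendsto_nhds_unique h1 h4

/-! ### Tails of bi-infinite sequences -/

/-- The tail `[α_k; α_{k+1}, α_{k+2}, ...]`. -/
noncomputable def cfTail (α : ℤ → ℕ) (k : ℤ) : ℝ := cfVal (fun n => (α (k + n) : ℝ))

/-- The sequence read backwards. -/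
def reversal (α : ℤ → ℕ) (k : ℤ) : ℕ := α (-k)

theorem cfTail_eq {α : ℤ → ℕ} (hα : ∀ n, 0 < α n) (k : ℤ) :
    cfTail α k = α k + 1 / cfTail α (k + 1) := by
  unfold cfTail
  rw [cfVal_eq_add_one_div _ (fun i => by exact_mod_cast hα _)]
  have : (fun i : ℕ => (α (k + ((i + 1 : ℕ) : ℤ)) : ℝ)) = fun n : ℕ => (α (k + 1 + n) : ℝ) := by
    funext i
    congr 2
    push_cast
    ring
  rw [this]
  simp

theorem one_le_cfTail {α : ℤ → ℕ} (hα : ∀ n, 0 < α n) (k : ℤ) : 1 ≤ cfTail α k :=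
  one_le_cfVal _ (fun i => by exact_mod_cast hα _)

theorem lambdaVal_eq {α : ℤ → ℕ} (hα : ∀ n, 0 < α n) (k : ℤ) :
    lambdaVal α k = cfTail α k + 1 / cfTail (reversal α) (-k + 1) := by
  unfold lambdaVal
  rw [cfVal_eq_add_one_div (fun n => if n = 0 then 0 else (α (k - n) : ℝ))
    (fun i => by simpa using Nat.one_le_iff_ne_zero.mpr (hα _).ne')]
  have : (fun i : ℕ => if i + 1 = 0 then 0 else (α (k - ((i + 1 : ℕ) : ℤ)) : ℝ)) =
      fun n : ℕ => (reversal α (-k + 1 + n) : ℝ) := by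
    funext i
    simp only [Nat.succ_ne_zero, if_false, reversal]
    congr 2
    push_cast
    ring
  rw [this]
  simp [cfTail]

theorem lambdaVal_eq_sub {α : ℤ → ℕ} (hα : ∀ n, 0 < α n) (k : ℤ) :
    lambdaVal α k = cfTail α k + cfTail (reversal α) (-k) - α k := by
  rw [lambdaVal_eq hα, cfTail_eq (α := reversal α) (fun n => hα _) (-k)]
  simp only [reversal, neg_neg]
  ring

theorem lambdaVal_reversal {α : ℤ → ℕ} (hα : ∀ n, 0 < α n) (k : ℤ) :
    lambdaVal (reversal α) k = lambdaVal α (-k) := by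
  have h : reversal (reversal α) = α := by funext n; simp [reversal]
  rw [lambdaVal_eq_sub (α := reversal α) (fun n => hα _), lambdaVal_eq_sub hα, h, neg_neg]
  simp only [reversal]
  ring

theorem cast_le_lambdaVal {α : ℤ → ℕ} (hα : ∀ n, 0 < α n) (k : ℤ) : (α k : ℝ) ≤ lambdaVal α k := by
  have h1 := one_le_cfTail hα (k + 1)
  have h2 := one_le_cfTail (α := reversal α) (fun n => hα _) (-k + 1)
  rw [lambdaVal_eq hα, cfTail_eq hα, add_assoc]
  exact le_add_of_nonneg_right (by positivity)

/-! ### Sequences in the letters `1` and `2` -/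

/-- `X` is the sequence of tails of the continued fraction with partial quotients `s` in `{1, 2}`. -/
structure IsTails (s : ℤ → ℕ) (X : ℤ → ℝ) : Prop where
  digit : ∀ k, s k = 1 ∨ s k = 2
  eq : ∀ k, X k = s k + 1 / X (k + 1)
  one_le : ∀ k, 1 ≤ X k

theorem isTails_cfTail {α : ℤ → ℕ} (h : ∀ k, α k = 1 ∨ α k = 2) : IsTails α (cfTail α) := by
  have hα : ∀ n, 0 < α n := fun n => by rcases h n with h | h <;> omega
  exact ⟨h, cfTail_eq hα, one_le_cfTail hα⟩

namespace IsTails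

variable {s : ℤ → ℕ} {X : ℤ → ℝ}

theorem eq_of_one (h : IsTails s X) {k : ℤ} (hk : s k = 1) : X k = 1 + 1 / X (k + 1) := by
  rw [h.eq k, hk]; norm_num

theorem eq_of_two (h : IsTails s X) {k : ℤ} (hk : s k = 2) : X k = 2 + 1 / X (k + 1) := by
  rw [h.eq k, hk]; norm_num

theorem le_three (h : IsTails s X) (k : ℤ) : X k ≤ 3 := by
  have h1 : 1 / X (k + 1) ≤ 1 := (div_le_one (by linarith [h.one_le (k + 1)])).mpr (h.one_le _)
  rcases h.digit k with hk | hk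
  · rw [h.eq_of_one hk]; linarith
  · rw [h.eq_of_two hk]; linarith

theorem four_thirds_le (h : IsTails s X) (k : ℤ) : 4 / 3 ≤ X k := by
  have h1 : 1 / 3 ≤ 1 / X (k + 1) :=
    one_div_le_one_div_of_le (by linarith [h.one_le (k + 1)]) (h.le_three _)
  rcases h.digit k with hk | hk
  · rw [h.eq_of_one hk]; linarith
  · rw [h.eq_of_two hk]; linarith

theorem one_div_bounds (h : IsTails s X) (k : ℤ) : 1 / 3 ≤ 1 / X k ∧ 1 / X k ≤ 3 / 4 := by
  have h0 := h.one_le k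
  have h1 := h.le_three k
  have h2 := h.four_thirds_le k
  constructor
  · exact one_div_le_one_div_of_le (by linarith) h1
  · rw [div_le_iff₀ (by linarith)]; linarith

theorem le_eleven_fourths (h : IsTails s X) (k : ℤ) : X k ≤ 11 / 4 := by
  have h1 := (h.one_div_bounds (k + 1)).2
  rcases h.digit k with hk | hk
  · rw [h.eq_of_one hk]; linarith
  · rw [h.eq_of_two hk]; linarith

theorem le_of_one (h : IsTails s X) {k : ℤ} (hk : s k = 1) : X k ≤ 7 / 4 := by
  rw [h.eq_of_one hk]; linarith [(h.one_div_bounds (k + 1)).2]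

theorem le_of_two (h : IsTails s X) {k : ℤ} (hk : s k = 2) : 7 / 3 ≤ X k := by
  rw [h.eq_of_two hk]; linarith [(h.one_div_bounds (k + 1)).1]

theorem digit_eq_two (h : IsTails s X) {k : ℤ} (hk : 2 ≤ X k) : s k = 2 :=
  (h.digit k).resolve_left fun h1 => by linarith [h.le_of_one h1]

theorem digit_eq_one (h : IsTails s X) {k : ℤ} (hk : X k ≤ 2) : s k = 1 :=
  (h.digit k).resolve_right fun h1 => by linarith [h.le_of_two h1]

end IsTails

/-- Prepending a partial quotient reverses the order and does not expand distances. -/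
theorem lt_and_sub_le_of_add_one_div_lt {d x y u v : ℝ} (hx : x = d + 1 / u) (hy : y = d + 1 / v)
    (hu : 1 ≤ u) (hv : 1 ≤ v) (h : x < y) : v < u ∧ y - x ≤ u - v := by
  have e : y - x = (u - v) / (u * v) := by rw [hx, hy]; field_simp; ring
  have hp : 1 ≤ u * v := by nlinarith
  have h1 : 0 < (u - v) / (u * v) := by linarith
  have h2 : 0 < u - v := (div_pos_iff_of_pos_right (by linarith)).mp h1
  exact ⟨by linarith, e ▸ div_le_self h2.le hp⟩

/-- Prepending a partial quotient contracts distances by the factor `2 / 3`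
as soon as one of the tails is at least `3 / 2`. -/
theorem sub_le_two_thirds_of_add_one_div_lt {d x y u v : ℝ} (hx : x = d + 1 / u)
    (hy : y = d + 1 / v) (hu : 1 ≤ u) (hv : 1 ≤ v) (h : x < y) (huv : 3 / 2 ≤ u) :
    v < u ∧ y - x ≤ 2 / 3 * (u - v) := by
  have h2 := (lt_and_sub_le_of_add_one_div_lt hx hy hu hv h).1
  have e : y - x = (u - v) / (u * v) := by rw [hx, hy]; field_simp; ring
  refine ⟨h2, ?_⟩
  rw [e, div_le_iff₀ (by positivity)]
  have hp : 3 / 2 ≤ u * v := by nlinarith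
  nlinarith

theorem nonpos_of_forall_le_pow {x : ℝ} (h : ∀ n : ℕ, x ≤ 3 * (2 / 3) ^ n) : x ≤ 0 := by
  have ht : Tendsto (fun n : ℕ => 3 * (2 / 3 : ℝ) ^ n) atTop (nhds (3 * 0)) :=
    (tendsto_pow_atTop_nhds_zero_of_lt_one (by norm_num) (by norm_num)).const_mul 3
  rw [mul_zero] at ht
  exact ge_of_tendsto' ht h

/-! ### The extremal tails -/

/-- The value `[2; 2, 1, 2, 2, 2, 1, 2, ...]` with period `2, 2, 1, 2`. -/
noncomputable def tailR : ℝ := 1 + √30 / 4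

/-- The value with period `2, 1, 1, 1, 1, 1, 2, 1, 1, 1`. -/
noncomputable def tailP : ℝ := (157 + √66045) / 158

/-- The value with period `2, 1, 1, 1, 2, 1, 1, 1, 1, 1`. -/
noncomputable def tailQ : ℝ := (159 + √66045) / 158

theorem sqrt_thirty_bounds : 5.477 < √30 ∧ √30 < 5.478 :=
  ⟨Real.lt_sqrt_of_sq_lt (by norm_num), (Real.sqrt_lt' (by norm_num)).mpr (by norm_num)⟩

theorem sqrt_66045_bounds : 256.99 < √66045 ∧ √66045 < 257 :=
  ⟨Real.lt_sqrt_of_sq_lt (by norm_num), (Real.sqrt_lt' (by norm_num)).mpr (by norm_num)⟩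

theorem tailR_bounds : 2.369 < tailR ∧ tailR < 2.37 := by
  have := sqrt_thirty_bounds
  unfold tailR
  constructor <;> linarith

theorem tailP_bounds : 2.62 < tailP ∧ tailP < 2.621 := by
  have := sqrt_66045_bounds
  unfold tailP
  constructor <;> linarith

theorem tailQ_bounds : 2.632 < tailQ ∧ tailQ < 2.633 := by
  have := sqrt_66045_bounds
  unfold tailQ
  constructor <;> linarith

theorem tailR_quadratic : 8 * tailR ^ 2 - 16 * tailR - 7 = 0 := by
  have := Real.sq_sqrt (show (0 : ℝ) ≤ 30 by norm_num)
  unfold tailR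
  linarith

theorem tailQ_quadratic : 79 * tailQ ^ 2 - 159 * tailQ - 129 = 0 := by
  have := Real.sq_sqrt (show (0 : ℝ) ≤ 66045 by norm_num)
  unfold tailQ
  linarith

theorem tailP_quadratic : 79 * tailP ^ 2 - 157 * tailP - 131 = 0 := by
  have := Real.sq_sqrt (show (0 : ℝ) ≤ 66045 by norm_num)
  unfold tailP
  linarith

theorem tailQ_eq_tailP_add : tailQ = tailP + 1 / 79 := by
  unfold tailQ tailP
  ring

theorem tailP_add_tailQ : tailP + tailQ - 2 = √66045 / 79 := by
  unfold tailQ tailP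
  ring

/-- `[2; 1, 1, 1, x]`, evaluated. -/
theorem two_one_one_one {x : ℝ} (hx : 0 < x) :
    2 + 1 / (1 + 1 / (1 + 1 / (1 + 1 / x))) = (8 * x + 5) / (3 * x + 2) := by
  have e1 : 1 + 1 / x = (x + 1) / x := by field_simp
  have e2 : 1 + 1 / ((x + 1) / x) = (2 * x + 1) / (x + 1) := by field_simp; ring
  have e3 : 1 + 1 / ((2 * x + 1) / (x + 1)) = (3 * x + 2) / (2 * x + 1) := by field_simp; ring
  rw [e1, e2, e3]
  field_simp
  ring

/-- `[2; 1, 1, 1, 1, 1, x]`, evaluated. -/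
theorem two_one_one_one_one_one {x : ℝ} (hx : 0 < x) :
    2 + 1 / (1 + 1 / (1 + 1 / (1 + 1 / (1 + 1 / (1 + 1 / x))))) = (21 * x + 13) / (8 * x + 5) := by
  have e1 : 1 + 1 / x = (x + 1) / x := by field_simp
  have e2 : 1 + 1 / ((x + 1) / x) = (2 * x + 1) / (x + 1) := by field_simp; ring
  have e3 : 1 + 1 / ((2 * x + 1) / (x + 1)) = (3 * x + 2) / (2 * x + 1) := by field_simp; ring
  have e4 : 1 + 1 / ((3 * x + 2) / (2 * x + 1)) = (5 * x + 3) / (3 * x + 2) := by field_simp; ring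
  have e5 : 1 + 1 / ((5 * x + 3) / (3 * x + 2)) = (8 * x + 5) / (5 * x + 3) := by field_simp; ring
  rw [e1, e2, e3, e4, e5]
  field_simp
  ring

/-- `[2; 2, 1, 2, x]`, evaluated. -/
theorem two_two_one_two {x : ℝ} (hx : 0 < x) :
    2 + 1 / (2 + 1 / (1 + 1 / (2 + 1 / x))) = (19 * x + 7) / (8 * x + 3) := by
  have e1 : 2 + 1 / x = (2 * x + 1) / x := by field_simp
  have e2 : 1 + 1 / ((2 * x + 1) / x) = (3 * x + 1) / (2 * x + 1) := by field_simp; ring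
  have e3 : 2 + 1 / ((3 * x + 1) / (2 * x + 1)) = (8 * x + 3) / (3 * x + 1) := by field_simp; ring
  rw [e1, e2, e3]
  field_simp
  ring

theorem tailR_eq : tailR = 2 + 1 / (2 + 1 / (1 + 1 / (2 + 1 / tailR))) := by
  have hR : 0 < tailR := by linarith [tailR_bounds.1]
  rw [two_two_one_two hR, eq_div_iff (by positivity)]
  linarith [tailR_quadratic]

theorem tailQ_eq : tailQ = 2 + 1 / (1 + 1 / (1 + 1 / (1 + 1 / tailP))) := by
  have hP : 0 < tailP := by linarith [tailP_bounds.1]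
  rw [two_one_one_one hP, eq_div_iff (by positivity), tailQ_eq_tailP_add]
  linarith [tailP_quadratic]

theorem tailP_eq : tailP = 2 + 1 / (1 + 1 / (1 + 1 / (1 + 1 / (1 + 1 / (1 + 1 / tailQ))))) := by
  have hQ : 0 < tailQ := by linarith [tailQ_bounds.1]
  rw [two_one_one_one_one_one hQ, eq_div_iff (by positivity)]
  have e : tailP = tailQ - 1 / 79 := by rw [tailQ_eq_tailP_add]; ring
  rw [e]
  linarith [tailQ_quadratic]

theorem two_mul_tailR_value :
    2 * ((8 * tailR + 5) / (3 * tailR + 2)) - 2 = (190 + 4 * √30) / 65 := by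
  have hR : 0 < tailR := by linarith [tailR_bounds.1]
  have h : √30 = 4 * (tailR - 1) := by unfold tailR; ring
  rw [h]
  field_simp
  linarith [tailR_quadratic]

theorem le_add_one_div (d : ℝ) {x : ℝ} (hx : 1 ≤ x) : d ≤ d + 1 / x := by
  have : 0 < 1 / x := by positivity
  linarith

namespace IsTails

variable {s : ℤ → ℕ} {X : ℤ → ℝ}

/-- A tail below `tailR` that starts with `2` starts with `2, 2, 1, 2`. -/
theorem tailR_step (h : IsTails s X)
    (h2121 : ∀ k, s k = 2 → s (k + 1) = 1 → s (k + 2) = 2 → s (k + 3) ≠ 1)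
    {k : ℤ} (hk : s k = 2) (hlt : X k < tailR) :
    s (k + 4) = 2 ∧ tailR - X k ≤ 2 / 3 * (tailR - X (k + 4)) := by
  have hR := tailR_bounds
  obtain ⟨R3, hR3⟩ : ∃ y, y = 2 + 1 / tailR := ⟨_, rfl⟩
  obtain ⟨R2, hR2⟩ : ∃ y, y = 1 + 1 / R3 := ⟨_, rfl⟩
  obtain ⟨R1, hR1⟩ : ∃ y, y = 2 + 1 / R2 := ⟨_, rfl⟩
  have hR0 : tailR = 2 + 1 / R1 := by rw [hR1, hR2, hR3]; exact tailR_eq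
  have b3 : 2 ≤ R3 := hR3 ▸ le_add_one_div _ (by linarith)
  have b2 : 1 ≤ R2 := hR2 ▸ le_add_one_div _ (by linarith)
  have b2' : R2 ≤ 2 := by
    have : 1 / R3 ≤ 1 := (div_le_one (by linarith)).mpr (by linarith)
    linarith
  have b1 : 2 ≤ R1 := hR1 ▸ le_add_one_div _ (by linarith)
  have a1 := h.one_le (k + 1)
  have a2 := h.one_le (k + 2)
  have a3 := h.one_le (k + 3)
  have a4 := h.one_le (k + 4)
  have c1 := lt_and_sub_le_of_add_one_div_lt (h.eq_of_two hk) hR0 a1 (by linarith) hlt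
  have d1 : s (k + 1) = 2 := h.digit_eq_two (by linarith)
  have c1 := sub_le_two_thirds_of_add_one_div_lt (h.eq_of_two hk) hR0 a1 (by linarith) hlt
    (by linarith)
  have e2 := h.eq_of_two d1
  rw [show k + 1 + 1 = k + 2 by ring] at e2
  have c2 := lt_and_sub_le_of_add_one_div_lt hR1 e2 b2 a2 c1.1
  have d2 : s (k + 2) = 1 := h.digit_eq_one (by linarith)
  have e3 := h.eq_of_one d2
  rw [show k + 2 + 1 = k + 3 by ring] at e3
  have c3 := lt_and_sub_le_of_add_one_div_lt e3 hR2 a3 (by linarith) c2.1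
  have d3 : s (k + 3) = 2 := h.digit_eq_two (by linarith)
  have e4 := h.eq_of_two d3
  rw [show k + 3 + 1 = k + 4 by ring] at e4
  have c4 := lt_and_sub_le_of_add_one_div_lt hR3 e4 (by linarith) a4 c3.1
  refine ⟨(h.digit _).resolve_left ?_, by linarith⟩
  have := h2121 (k + 1) d1
  rw [show k + 1 + 1 = k + 2 by ring, show k + 1 + 2 = k + 3 by ring,
    show k + 1 + 3 = k + 4 by ring] at this
  exact this d2 d3

/-- Without the word `2121`, a tail that starts with `2` is at least `tailR`. -/
theorem tailR_le (h : IsTails s X)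
    (h2121 : ∀ k, s k = 2 → s (k + 1) = 1 → s (k + 2) = 2 → s (k + 3) ≠ 1)
    {k : ℤ} (hk : s k = 2) : tailR ≤ X k := by
  have key : ∀ (n : ℕ) (k : ℤ), s k = 2 → tailR - X k ≤ 3 * (2 / 3) ^ n := by
    intro n
    induction n with
    | zero => intro k _; linarith [h.one_le k, tailR_bounds.2, pow_zero (2 / 3 : ℝ)]
    | succ n ih =>
      intro k hk
      rcases lt_or_ge (X k) tailR with hlt | hge
      · obtain ⟨h4, hle⟩ := h.tailR_step h2121 hk hlt
        have := ih _ h4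
        rw [pow_succ]
        linarith
      · have : (0 : ℝ) ≤ 3 * (2 / 3) ^ (n + 1) := by positivity
        linarith
  linarith [nonpos_of_forall_le_pow fun n => key n k hk]

/-- A tail above `tailQ` preceded by `1` starts with `2, 1, 1, 1`. -/
theorem tailQ_step (h : IsTails s X)
    (h1212 : ∀ k, s k = 1 → s (k + 1) = 2 → s (k + 2) = 1 → s (k + 3) ≠ 2)
    {k : ℤ} (hk : s k = 1) (hlt : tailQ < X (k + 1)) :
    (s (k + 1) = 2 ∧ s (k + 2) = 1 ∧ s (k + 3) = 1 ∧ s (k + 4) = 1) ∧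
      X (k + 1) - tailQ ≤ 2 / 3 * (X (k + 5) - tailP) := by
  have hP := tailP_bounds
  have hQ := tailQ_bounds
  obtain ⟨Q3, hQ3⟩ : ∃ y, y = 1 + 1 / tailP := ⟨_, rfl⟩
  obtain ⟨Q2, hQ2⟩ : ∃ y, y = 1 + 1 / Q3 := ⟨_, rfl⟩
  obtain ⟨Q1, hQ1⟩ : ∃ y, y = 1 + 1 / Q2 := ⟨_, rfl⟩
  have hQ0 : tailQ = 2 + 1 / Q1 := by rw [hQ1, hQ2, hQ3]; exact tailQ_eq
  have b3 : 1 ≤ Q3 := hQ3 ▸ le_add_one_div _ (by linarith)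
  have b3' : Q3 ≤ 2 := by
    have : 1 / tailP ≤ 1 := (div_le_one (by linarith)).mpr (by linarith)
    linarith
  have b2 : 1 ≤ Q2 := hQ2 ▸ le_add_one_div _ (by linarith)
  have b2' : Q2 ≤ 2 := by
    have : 1 / Q3 ≤ 1 := (div_le_one (by linarith)).mpr (by linarith)
    linarith
  have b1 : 3 / 2 ≤ Q1 := by
    have : 1 / 2 ≤ 1 / Q2 := one_div_le_one_div_of_le (by linarith) b2'
    linarith
  have b1' : Q1 ≤ 2 := by
    have : 1 / Q2 ≤ 1 := (div_le_one (by linarith)).mpr (by linarith)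
    linarith
  have d1 : s (k + 1) = 2 := h.digit_eq_two (by linarith)
  have e1 := h.eq_of_two d1
  rw [show k + 1 + 1 = k + 2 by ring] at e1
  have c1 := sub_le_two_thirds_of_add_one_div_lt hQ0 e1 (by linarith) (h.one_le _) hlt b1
  have d2 : s (k + 2) = 1 := h.digit_eq_one (by linarith)
  have e2 := h.eq_of_one d2
  rw [show k + 2 + 1 = k + 3 by ring] at e2
  have c2 := lt_and_sub_le_of_add_one_div_lt e2 hQ1 (h.one_le _) b2 c1.1
  have d3 : s (k + 3) = 1 := (h.digit _).resolve_right (h1212 k hk d1 d2)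
  have e3 := h.eq_of_one d3
  rw [show k + 3 + 1 = k + 4 by ring] at e3
  have c3 := lt_and_sub_le_of_add_one_div_lt hQ2 e3 b3 (h.one_le _) c2.1
  have d4 : s (k + 4) = 1 := h.digit_eq_one (by linarith)
  have e4 := h.eq_of_one d4
  rw [show k + 4 + 1 = k + 5 by ring] at e4
  have c4 := lt_and_sub_le_of_add_one_div_lt e4 hQ3 (h.one_le _) (by linarith) c3.1
  exact ⟨⟨d1, d2, d3, d4⟩, by linarith⟩

/-- A tail above `tailP` preceded by `2, 1, 1, 1` starts with `2, 1, 1, 1, 1, 1`. -/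
theorem tailP_step (h : IsTails s X)
    (h1212 : ∀ k, s k = 1 → s (k + 1) = 2 → s (k + 2) = 1 → s (k + 3) ≠ 2)
    (h211121112 : ∀ k, s k = 2 → s (k + 1) = 1 → s (k + 2) = 1 → s (k + 3) = 1 → s (k + 4) = 2 →
      s (k + 5) = 1 → s (k + 6) = 1 → s (k + 7) = 1 → s (k + 8) ≠ 2)
    {k : ℤ} (hk : s k = 2 ∧ s (k + 1) = 1 ∧ s (k + 2) = 1 ∧ s (k + 3) = 1)
    (hlt : tailP < X (k + 4)) :
    s (k + 9) = 1 ∧ X (k + 4) - tailP ≤ 2 / 3 * (X (k + 10) - tailQ) := by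
  obtain ⟨hk0, hk1, hk2, hk3⟩ := hk
  have hP := tailP_bounds
  have hQ := tailQ_bounds
  obtain ⟨P5, hP5⟩ : ∃ y, y = 1 + 1 / tailQ := ⟨_, rfl⟩
  obtain ⟨P4, hP4⟩ : ∃ y, y = 1 + 1 / P5 := ⟨_, rfl⟩
  obtain ⟨P3, hP3⟩ : ∃ y, y = 1 + 1 / P4 := ⟨_, rfl⟩
  obtain ⟨P2, hP2⟩ : ∃ y, y = 1 + 1 / P3 := ⟨_, rfl⟩
  obtain ⟨P1, hP1⟩ : ∃ y, y = 1 + 1 / P2 := ⟨_, rfl⟩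
  have hP0 : tailP = 2 + 1 / P1 := by rw [hP1, hP2, hP3, hP4, hP5]; exact tailP_eq
  have bound : ∀ {x y : ℝ}, y = 1 + 1 / x → 1 ≤ x → 1 ≤ y ∧ y ≤ 2 := by
    intro x y hy hx
    have h1 : 1 / x ≤ 1 := (div_le_one (by linarith)).mpr hx
    have h2 : 0 < 1 / x := by positivity
    constructor <;> linarith
  have b5 := bound hP5 (by linarith)
  have b4 := bound hP4 b5.1
  have b3 := bound hP3 b4.1
  have b2 := bound hP2 b3.1
  have b1 := bound hP1 b2.1
  have b1' : 3 / 2 ≤ P1 := by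
    have : 1 / 2 ≤ 1 / P2 := one_div_le_one_div_of_le (by linarith) b2.2
    linarith
  have d4 : s (k + 4) = 2 := h.digit_eq_two (by linarith)
  have e4 := h.eq_of_two d4
  rw [show k + 4 + 1 = k + 5 by ring] at e4
  have c4 := sub_le_two_thirds_of_add_one_div_lt hP0 e4 b1.1 (h.one_le _) hlt b1'
  have d5 : s (k + 5) = 1 := h.digit_eq_one (by linarith)
  have e5 := h.eq_of_one d5
  rw [show k + 5 + 1 = k + 6 by ring] at e5
  have c5 := lt_and_sub_le_of_add_one_div_lt e5 hP1 (h.one_le _) b2.1 c4.1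
  have d6 : s (k + 6) = 1 := by
    have := h1212 (k + 3) hk3
    rw [show k + 3 + 1 = k + 4 by ring, show k + 3 + 2 = k + 5 by ring,
      show k + 3 + 3 = k + 6 by ring] at this
    exact (h.digit _).resolve_right (this d4 d5)
  have e6 := h.eq_of_one d6
  rw [show k + 6 + 1 = k + 7 by ring] at e6
  have c6 := lt_and_sub_le_of_add_one_div_lt hP2 e6 b3.1 (h.one_le _) c5.1
  have d7 : s (k + 7) = 1 := h.digit_eq_one (by linarith)
  have e7 := h.eq_of_one d7
  rw [show k + 7 + 1 = k + 8 by ring] at e7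
  have c7 := lt_and_sub_le_of_add_one_div_lt e7 hP3 (h.one_le _) b4.1 c6.1
  have d8 : s (k + 8) = 1 :=
    (h.digit _).resolve_right (h211121112 k hk0 hk1 hk2 hk3 d4 d5 d6 d7)
  have e8 := h.eq_of_one d8
  rw [show k + 8 + 1 = k + 9 by ring] at e8
  have c8 := lt_and_sub_le_of_add_one_div_lt hP4 e8 b5.1 (h.one_le _) c7.1
  have d9 : s (k + 9) = 1 := h.digit_eq_one (by linarith)
  have e9 := h.eq_of_one d9
  rw [show k + 9 + 1 = k + 10 by ring] at e9
  have c9 := lt_and_sub_le_of_add_one_div_lt e9 hP5 (h.one_le _) (by linarith) c8.1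
  exact ⟨d9, by linarith⟩

/-- Without the words `1212` and `211121112`, tails preceded by `1` are at most `tailQ` and
tails preceded by `2111` are at most `tailP`. -/
theorem le_tailQ_and_le_tailP (h : IsTails s X)
    (h1212 : ∀ k, s k = 1 → s (k + 1) = 2 → s (k + 2) = 1 → s (k + 3) ≠ 2)
    (h211121112 : ∀ k, s k = 2 → s (k + 1) = 1 → s (k + 2) = 1 → s (k + 3) = 1 → s (k + 4) = 2 →
      s (k + 5) = 1 → s (k + 6) = 1 → s (k + 7) = 1 → s (k + 8) ≠ 2) (k : ℤ) :
    (s k = 1 → X (k + 1) ≤ tailQ) ∧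
    (s k = 2 ∧ s (k + 1) = 1 ∧ s (k + 2) = 1 ∧ s (k + 3) = 1 → X (k + 4) ≤ tailP) := by
  have key : ∀ (n : ℕ) (k : ℤ), (s k = 1 → X (k + 1) - tailQ ≤ 3 * (2 / 3) ^ n) ∧
      (s k = 2 ∧ s (k + 1) = 1 ∧ s (k + 2) = 1 ∧ s (k + 3) = 1 →
        X (k + 4) - tailP ≤ 3 * (2 / 3) ^ n) := by
    intro n
    induction n with
    | zero =>
      intro k
      constructor <;> intro _
      · linarith [h.le_three (k + 1), tailQ_bounds.1, pow_zero (2 / 3 : ℝ)]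
      · linarith [h.le_three (k + 4), tailP_bounds.1, pow_zero (2 / 3 : ℝ)]
    | succ n ih =>
      intro k
      have hp : (0 : ℝ) ≤ 3 * (2 / 3) ^ (n + 1) := by positivity
      constructor <;> intro hk
      · rcases lt_or_ge tailQ (X (k + 1)) with hlt | hge
        · obtain ⟨hd, hle⟩ := h.tailQ_step h1212 hk hlt
          have := (ih (k + 1)).2
          rw [show k + 1 + 1 = k + 2 by ring, show k + 1 + 2 = k + 3 by ring,
            show k + 1 + 3 = k + 4 by ring, show k + 1 + 4 = k + 5 by ring] at this
          have := this hd
          rw [pow_succ]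
          linarith
        · linarith
      · rcases lt_or_ge tailP (X (k + 4)) with hlt | hge
        · obtain ⟨hd, hle⟩ := h.tailP_step h1212 h211121112 hk hlt
          have := (ih (k + 9)).1 hd
          rw [show k + 9 + 1 = k + 10 by ring] at this
          rw [pow_succ]
          linarith
        · linarith
  constructor <;> intro hk
  · linarith [nonpos_of_forall_le_pow fun n => (key n k).1 hk]
  · linarith [nonpos_of_forall_le_pow fun n => (key n k).2 hk]

end IsTails

/-! ### Local estimates of `lambdaVal` -/

namespace IsTails

variable {s : ℤ → ℕ} {X : ℤ → ℝ}

theorem eq_of_two_one_one_one (h : IsTails s X) {k : ℤ} (h0 : s k = 2) (h1 : s (k + 1) = 1)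
    (h2 : s (k + 2) = 1) (h3 : s (k + 3) = 1) :
    X k = (8 * X (k + 4) + 5) / (3 * X (k + 4) + 2) := by
  rw [← two_one_one_one (by linarith [h.one_le (k + 4)]), h.eq_of_two h0, h.eq_of_one h1, add_assoc,
    one_add_one_eq_two, h.eq_of_one h2, add_assoc k 2 1, show (2 + 1 : ℤ) = 3 by norm_num,
    h.eq_of_one h3, add_assoc k 3 1]
  norm_num

theorem eq_of_two_one_one_one_one_one (h : IsTails s X) {k : ℤ} (h0 : s k = 2)
    (h1 : s (k + 1) = 1) (h2 : s (k + 2) = 1) (h3 : s (k + 3) = 1) (h4 : s (k + 4) = 1)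
    (h5 : s (k + 5) = 1) : X k = (21 * X (k + 6) + 13) / (8 * X (k + 6) + 5) := by
  have hX := h.one_le (k + 6)
  have e5 := h.eq_of_one h5
  have e4 := h.eq_of_one h4
  rw [show k + 5 + 1 = k + 6 by ring] at e5
  rw [show k + 4 + 1 = k + 5 by ring, e5] at e4
  rw [← two_one_one_one_one_one (by linarith), h.eq_of_two_one_one_one h0 h1 h2 h3, e4,
    two_one_one_one]
  positivity

theorem le_of_two_two (h : IsTails s X) {k : ℤ} (h0 : s k = 2) (h1 : s (k + 1) = 2) :
    X k ≤ 17 / 7 := by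
  have := h.le_of_two h1
  have : 1 / X (k + 1) ≤ 1 / (7 / 3) := one_div_le_one_div_of_le (by norm_num) this
  rw [h.eq_of_two h0]
  linarith

theorem le_of_two_one_one (h : IsTails s X) {k : ℤ} (h0 : s k = 2) (h1 : s (k + 1) = 1)
    (h2 : s (k + 2) = 1) : X k ≤ 29 / 11 ∧ (s (k + 3) = 2 → X k ≤ 44 / 17) := by
  have e1 := h.eq_of_one h1
  have e2 := h.eq_of_one h2
  rw [show k + 1 + 1 = k + 2 by ring] at e1
  rw [show k + 2 + 1 = k + 3 by ring] at e2
  have aux : ∀ c : ℝ, 0 < c → c ≤ X (k + 3) → X k ≤ 2 + 1 / (1 + 1 / (1 + 1 / c)) := by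
    intro c hc hcX
    have := hc.trans_le hcX
    rw [h.eq_of_two h0, e1, e2]
    gcongr
  constructor
  · exact (aux _ (by norm_num) (h.four_thirds_le _)).trans (by norm_num)
  · intro h3
    exact (aux _ (by norm_num) (h.le_of_two h3)).trans (by norm_num)

end IsTails

theorem two_one_one_one_mono {x y : ℝ} (hx : 0 < x) (hxy : x ≤ y) :
    (8 * x + 5) / (3 * x + 2) ≤ (8 * y + 5) / (3 * y + 2) := by
  rw [div_le_div_iff₀ (by positivity) (by linarith)]
  linarith

theorem reversal_neg_add (α : ℤ → ℕ) (k i : ℤ) : reversal α (-k + i) = α (k - i) := by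
  unfold reversal
  congr 1
  ring

theorem reversal_reversal (α : ℤ → ℕ) : reversal (reversal α) = α := by
  funext n
  simp [reversal]


theorem pos_of_digits {α : ℤ → ℕ} (hα : ∀ k, α k = 1 ∨ α k = 2) (k : ℤ) : 0 < α k := by
  rcases hα k with h | h <;> omega

theorem reversal_digits {α : ℤ → ℕ} (hα : ∀ k, α k = 1 ∨ α k = 2) (k : ℤ) :
    reversal α k = 1 ∨ reversal α k = 2 := hα _

theorem lambdaVal_le_of_one {α : ℤ → ℕ} (hα : ∀ k, α k = 1 ∨ α k = 2) {k : ℤ} (hk : α k = 1) :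
    lambdaVal α k ≤ 5 / 2 := by
  rw [lambdaVal_eq (pos_of_digits hα)]
  linarith [(isTails_cfTail hα).le_of_one hk,
    ((isTails_cfTail (reversal_digits hα)).one_div_bounds (-k + 1)).2]

theorem lambdaVal_le_of_two_two {α : ℤ → ℕ} (hα : ∀ k, α k = 1 ∨ α k = 2) {k : ℤ} (hk : α k = 2)
    (h : α (k + 1) = 2 ∨ α (k - 1) = 2) : lambdaVal α k ≤ 16 / 5 := by
  have hX := isTails_cfTail hα
  have hY := isTails_cfTail (reversal_digits hα)
  rw [lambdaVal_eq_sub (pos_of_digits hα), hk]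
  push_cast
  rcases h with h | h
  · linarith [hX.le_of_two_two hk h, hY.le_eleven_fourths (-k)]
  · rw [← reversal_neg_add α] at h
    linarith [hY.le_of_two_two (k := -k) (by simpa [reversal] using hk) h, hX.le_eleven_fourths k]


/-- Sequences in `{1, 2}` with all values `λ_k` below the right end of the gap. -/
structure IsBelowGapEnd (α : ℤ → ℕ) : Prop where
  digit : ∀ k, α k = 1 ∨ α k = 2
  lt : ∀ k, lambdaVal α k < (190 + 4 * √30) / 65

theorem gapEnd_lt : (190 + 4 * √30) / 65 < 3.2602 := by
  linarith [sqrt_thirty_bounds.2]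

theorem lt_gapStart : 3.253 < √66045 / 79 := by
  linarith [sqrt_66045_bounds.1]

namespace IsBelowGapEnd

variable {α : ℤ → ℕ}

theorem pos (h : IsBelowGapEnd α) (k : ℤ) : 0 < α k := pos_of_digits h.digit k

theorem tails (h : IsBelowGapEnd α) : IsTails α (cfTail α) := isTails_cfTail h.digit

theorem reverse (h : IsBelowGapEnd α) : IsBelowGapEnd (reversal α) :=
  ⟨reversal_digits h.digit, fun k => by rw [lambdaVal_reversal h.pos]; exact h.lt _⟩

theorem avoids_1212 (h : IsBelowGapEnd α) (k : ℤ) (h0 : α k = 1) (h1 : α (k + 1) = 2)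
    (h2 : α (k + 2) = 1) : α (k + 3) ≠ 2 := by
  intro h3
  have hlt := h.lt (k + 1)
  rw [lambdaVal_eq h.pos] at hlt
  have hb : reversal α (-(k + 1) + 1) = 1 := by rw [reversal_neg_add]; simpa using h0
  have y1 := h.reverse.tails.le_of_one hb
  have y0 := h.reverse.tails.one_le (-(k + 1) + 1)
  have y2 : 1 / (7 / 4) ≤ 1 / cfTail (reversal α) (-(k + 1) + 1) :=
    one_div_le_one_div_of_le (by linarith) y1
  have e1 := h.tails.eq_of_two h1
  have e2 := h.tails.eq_of_one h2
  rw [show k + 1 + 1 = k + 2 by ring] at e1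
  rw [show k + 2 + 1 = k + 3 by ring] at e2
  have x3 : 1 / cfTail α (k + 3) ≤ 1 / (7 / 3) :=
    one_div_le_one_div_of_le (by norm_num) (h.tails.le_of_two h3)
  have x2 : 1 / (10 / 7) ≤ 1 / cfTail α (k + 2) :=
    one_div_le_one_div_of_le (by linarith [h.tails.one_le (k + 2)]) (by linarith)
  linarith [gapEnd_lt]

theorem avoids_2121 (h : IsBelowGapEnd α) (k : ℤ) (h0 : α k = 2) (h1 : α (k + 1) = 1)
    (h2 : α (k + 2) = 2) : α (k + 3) ≠ 1 := by
  intro h3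
  have e := fun i => reversal_neg_add α (k + 3) i
  refine h.reverse.avoids_1212 (-(k + 3)) (by simpa [reversal] using h3) ?_ ?_ ?_
  · rwa [e, show k + 3 - 1 = k + 2 by ring]
  · rwa [e, show k + 3 - 2 = k + 1 by ring]
  · rwa [e, show k + 3 - 3 = k by ring]

theorem le_cfTail (h : IsBelowGapEnd α) {k : ℤ} (h0 : α k = 2)
    (h1 : α (k + 1) = 1 ∧ α (k + 2) = 1 ∧ α (k + 3) = 1) (h4 : α (k + 4) = 2) :
    (8 * tailR + 5) / (3 * tailR + 2) ≤ cfTail α k := by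
  rw [h.tails.eq_of_two_one_one_one h0 h1.1 h1.2.1 h1.2.2]
  exact two_one_one_one_mono (by linarith [tailR_bounds.1]) (h.tails.tailR_le h.avoids_2121 h4)

theorem avoids_211121112_centered (h : IsBelowGapEnd α) {k : ℤ} (h0 : α k = 2)
    (ha : α (k + 1) = 1 ∧ α (k + 2) = 1 ∧ α (k + 3) = 1)
    (hb : reversal α (-k + 1) = 1 ∧ reversal α (-k + 2) = 1 ∧ reversal α (-k + 3) = 1)
    (ha4 : α (k + 4) = 2) : reversal α (-k + 4) ≠ 2 := by
  intro hb4
  have hlt := h.lt k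
  have x := h.le_cfTail h0 ha ha4
  have y := h.reverse.le_cfTail (k := -k) (by simpa [reversal] using h0) hb hb4
  rw [lambdaVal_eq_sub h.pos, h0, ← two_mul_tailR_value] at hlt
  push_cast at hlt
  linarith

theorem avoids_211121112 (h : IsBelowGapEnd α) (k : ℤ) (h0 : α k = 2) (h1 : α (k + 1) = 1)
    (h2 : α (k + 2) = 1) (h3 : α (k + 3) = 1) (h4 : α (k + 4) = 2) (h5 : α (k + 5) = 1)
    (h6 : α (k + 6) = 1) (h7 : α (k + 7) = 1) : α (k + 8) ≠ 2 := by
  intro h8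
  have e := fun i => reversal_neg_add α (k + 4) i
  refine h.avoids_211121112_centered h4 ⟨?_, ?_, ?_⟩ ⟨?_, ?_, ?_⟩ ?_ ?_
  · rwa [add_assoc]
  · rwa [add_assoc]
  · rwa [add_assoc]
  · rwa [e, show k + 4 - 1 = k + 3 by ring]
  · rwa [e, show k + 4 - 2 = k + 2 by ring]
  · rwa [e, show k + 4 - 3 = k + 1 by ring]
  · rwa [add_assoc]
  · rwa [e, show k + 4 - 4 = k by ring]

/-- The value at the center of `2111(2)1111` is at most the left end of the gap. -/
theorem lambdaVal_le_of_2111_2_1111 (h : IsBelowGapEnd α) {k : ℤ} (h0 : α k = 2)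
    (ha : α (k + 1) = 1 ∧ α (k + 2) = 1 ∧ α (k + 3) = 1)
    (hb : reversal α (-k + 1) = 1 ∧ reversal α (-k + 2) = 1 ∧ reversal α (-k + 3) = 1)
    (ha4 : α (k + 4) = 1) : lambdaVal α k ≤ √66045 / 79 := by
  have h0' : reversal α (-k) = 2 := by simpa [reversal] using h0
  have hX := h.tails
  have hY := h.reverse.tails
  have x0 := hX.eq_of_two_one_one_one h0 ha.1 ha.2.1 ha.2.2
  have y0 := hY.eq_of_two_one_one_one h0' hb.1 hb.2.1 hb.2.2
  rw [lambdaVal_eq_sub h.pos, h0]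
  push_cast
  rcases h.digit (k + 5) with h5 | h5
  · have x6 := (hX.le_tailQ_and_le_tailP h.avoids_1212 h.avoids_211121112 (k + 5)).1 h5
    rw [show k + 5 + 1 = k + 6 by ring] at x6
    have x6' := hX.one_le (k + 6)
    have y4 := (hY.le_tailQ_and_le_tailP h.reverse.avoids_1212
      h.reverse.avoids_211121112 (-k)).2 ⟨h0', hb⟩
    have hx : cfTail α k ≤ tailP := by
      rw [hX.eq_of_two_one_one_one_one_one h0 ha.1 ha.2.1 ha.2.2 ha4 h5, tailP_eq,
        two_one_one_one_one_one (by linarith), div_le_div_iff₀ (by linarith) (by linarith)]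
      linarith
    have hy : cfTail (reversal α) (-k) ≤ tailQ := by
      have y4' := hY.one_le (-k + 4)
      rw [y0, tailQ_eq, two_one_one_one (by linarith)]
      exact two_one_one_one_mono (by linarith) y4
    linarith [tailP_add_tailQ]
  · have e4 := hX.eq_of_one ha4
    rw [show k + 4 + 1 = k + 5 by ring] at e4
    have x5 : 1 / cfTail α (k + 5) ≤ 1 / (7 / 3) :=
      one_div_le_one_div_of_le (by norm_num) (hX.le_of_two h5)
    have x1 := two_one_one_one_mono (by linarith [hX.one_le (k + 4)])
      (show cfTail α (k + 4) ≤ 10 / 7 by linarith)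
    have y1 := two_one_one_one_mono (by linarith [hY.one_le (-k + 4)])
      (hY.le_eleven_fourths (-k + 4))
    rw [← x0] at x1
    rw [← y0] at y1
    norm_num at x1 y1
    linarith [lt_gapStart]

/-- If every `λ_k` is below the right end of the gap, it is at most the left end. -/
theorem lambdaVal_le (h : IsBelowGapEnd α) (k : ℤ) : lambdaVal α k ≤ √66045 / 79 := by
  have hL := lt_gapStart
  rcases h.digit k with h0 | h0
  · linarith [lambdaVal_le_of_one h.digit h0]
  have h0' : reversal α (-k) = 2 := by simpa [reversal] using h0
  have hX := h.tails
  have hY := h.reverse.tails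
  have hl : lambdaVal α k = cfTail α k + cfTail (reversal α) (-k) - 2 := by
    rw [lambdaVal_eq_sub h.pos, h0]
    norm_num
  rcases h.digit (k + 1) with a1 | a1
  swap
  · linarith [lambdaVal_le_of_two_two h.digit h0 (Or.inl a1)]
  rcases h.reverse.digit (-k + 1) with b1 | b1
  swap
  · rw [reversal_neg_add] at b1
    linarith [lambdaVal_le_of_two_two h.digit h0 (Or.inr b1)]
  have a2 : α (k + 2) = 1 := by
    refine (h.digit _).resolve_right ?_
    have := h.avoids_1212 (k - 1) (by rwa [← reversal_neg_add α])
    rw [show k - 1 + 1 = k by ring, show k - 1 + 2 = k + 1 by ring,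
      show k - 1 + 3 = k + 2 by ring] at this
    exact this h0 a1
  have b2 : reversal α (-k + 2) = 1 := by
    refine (h.reverse.digit _).resolve_right ?_
    have := h.reverse.avoids_1212 (-k - 1)
      (by unfold reversal; rwa [show -(-k - 1) = k + 1 by ring])
    rw [show -k - 1 + 1 = -k by ring, show -k - 1 + 2 = -k + 1 by ring,
      show -k - 1 + 3 = -k + 2 by ring] at this
    exact this h0' b1
  have x2 := hX.le_of_two_one_one h0 a1 a2
  have y2 := hY.le_of_two_one_one h0' b1 b2
  rcases h.digit (k + 3) with a3 | a3
  swap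
  · linarith [x2.2 a3]
  rcases h.reverse.digit (-k + 3) with b3 | b3
  swap
  · linarith [y2.2 b3]
  have x0 := hX.eq_of_two_one_one_one h0 a1 a2 a3
  have y0 := hY.eq_of_two_one_one_one h0' b1 b2 b3
  rcases h.digit (k + 4) with a4 | a4 <;> rcases h.reverse.digit (-k + 4) with b4 | b4
  · have x1 := two_one_one_one_mono (by linarith [hX.one_le (k + 4)]) (hX.le_of_one a4)
    have y1 := two_one_one_one_mono (by linarith [hY.one_le (-k + 4)]) (hY.le_of_one b4)
    rw [← x0] at x1
    rw [← y0] at y1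
    norm_num at x1 y1
    linarith
  · exact h.lambdaVal_le_of_2111_2_1111 h0 ⟨a1, a2, a3⟩ ⟨b1, b2, b3⟩ a4
  · have := h.reverse.lambdaVal_le_of_2111_2_1111 h0' ⟨b1, b2, b3⟩
      (by rw [reversal_reversal, neg_neg]; exact ⟨a1, a2, a3⟩) b4
    rwa [lambdaVal_reversal h.pos, neg_neg] at this
  · exact absurd b4 (h.avoids_211121112_centered h0 ⟨a1, a2, a3⟩ ⟨b1, b2, b3⟩ a4)

end IsBelowGapEnd

/-- If every `λ_k` is below `7 / 2`, all letters are `1` or `2`. -/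
theorem digits_of_lambdaVal_lt {α : ℤ → ℕ} (hα : ∀ n, 0 < α n)
    (h : ∀ k, lambdaVal α k < 7 / 2) (k : ℤ) : α k = 1 ∨ α k = 2 := by
  have le3 : ∀ n, α n ≤ 3 := fun n => by
    have h1 := (cast_le_lambdaVal hα n).trans_lt (h n)
    have : (α n : ℝ) < (4 : ℕ) := by push_cast; linarith
    exact Nat.lt_succ_iff.mp (Nat.cast_lt.mp this)
  have quarter : ∀ β : ℤ → ℕ, (∀ n, 0 < β n) → (∀ n, β n ≤ 3) → ∀ n, 1 / 4 ≤ 1 / cfTail β n := by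
    intro β hβ hβ3 n
    have h1 := one_le_cfTail hβ n
    have h2 := one_le_cfTail hβ (n + 1)
    refine one_div_le_one_div_of_le (by linarith) ?_
    have h3 : 1 / cfTail β (n + 1) ≤ 1 := (div_le_one (by linarith)).mpr h2
    have h4 : (β n : ℝ) ≤ 3 := by exact_mod_cast hβ3 n
    rw [cfTail_eq hβ]
    linarith
  have hne : α k ≠ 3 := fun h3 => by
    have hlt := h k
    rw [lambdaVal_eq hα, cfTail_eq hα, h3] at hlt
    push_cast at hlt
    linarith [quarter α hα le3 (k + 1),
      quarter (reversal α) (fun n => hα _) (fun n => le3 _) (-k + 1)]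
  have := hα k
  have := le3 k
  omega

theorem markovValue_eq_of_le {α : ℤ → ℕ} {c : ℝ} (hle : ∀ k, lambdaVal α k ≤ c) {k : ℤ}
    (hk : lambdaVal α k = c) : BddAbove (range (lambdaVal α)) ∧ markovValue α = c := by
  have hb : BddAbove (range (lambdaVal α)) := ⟨c, by rintro _ ⟨n, rfl⟩; exact hle n⟩
  exact ⟨hb, le_antisymm (ciSup_le hle) (hk ▸ le_ciSup hb k)⟩

/-! ### The end points -/

/-- The periodic sequence with period `2, 1, 1, 1, 1, 1, 2, 1, 1, 1`. -/
def gapStartSeq (n : ℤ) : ℕ := if n % 10 = 0 ∨ n % 10 = 6 then 2 else 1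

theorem gapStartSeq_digits (n : ℤ) : gapStartSeq n = 1 ∨ gapStartSeq n = 2 := by
  unfold gapStartSeq
  split_ifs <;> simp

theorem cfTail_add_of_periodic {α : ℤ → ℕ} {p : ℤ} {k : ℤ}
    (h : ∀ n : ℕ, α (k + p + n) = α (k + n)) : cfTail α (k + p) = cfTail α k := by
  unfold cfTail
  simp only [h]

theorem IsTails.eq_tailP_and_eq_tailQ {s : ℤ → ℕ} {X : ℤ → ℝ} (h : IsTails s X) {k : ℤ}
    (h0 : s k = 2) (h1 : s (k + 1) = 1) (h2 : s (k + 2) = 1) (h3 : s (k + 3) = 1)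
    (h4 : s (k + 4) = 1) (h5 : s (k + 5) = 1) (h6 : s (k + 6) = 2) (h7 : s (k + 7) = 1)
    (h8 : s (k + 8) = 1) (h9 : s (k + 9) = 1) (hp : X (k + 10) = X k) :
    X k = tailP ∧ X (k + 6) = tailQ := by
  have eP := h.eq_of_two_one_one_one_one_one h0 h1 h2 h3 h4 h5
  have eQ := h.eq_of_two_one_one_one (k := k + 6) h6 (by rwa [add_assoc]) (by rwa [add_assoc])
    (by rwa [add_assoc])
  rw [show k + 6 + 4 = k + 10 by ring, hp] at eQ
  have bP := h.one_le k
  have bQ := h.one_le (k + 6)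
  have hP : X k = tailP := by
    have e : X k * (79 * X k + 50) = 207 * X k + 131 := by
      rw [eQ] at eP
      have e1 : (21 * ((8 * X k + 5) / (3 * X k + 2)) + 13) /
          (8 * ((8 * X k + 5) / (3 * X k + 2)) + 5) = (207 * X k + 131) / (79 * X k + 50) := by
        field_simp
        ring
      rwa [e1, eq_div_iff (by positivity)] at eP
    have f : (X k - tailP) * (79 * (X k + tailP) - 157) = 0 := by
      linarith [tailP_quadratic]
    rcases mul_eq_zero.mp f with f | f
    · linarith
    · linarith [tailP_bounds.1]
  refine ⟨hP, ?_⟩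
  rw [eQ, hP, tailQ_eq, two_one_one_one (by linarith)]

theorem lambdaVal_gapStartSeq {k : ℤ} (hk : gapStartSeq k = 2) :
    lambdaVal gapStartSeq k = √66045 / 79 := by
  have hX := isTails_cfTail gapStartSeq_digits
  have hY := isTails_cfTail (reversal_digits gapStartSeq_digits)
  have pX : ∀ n, cfTail gapStartSeq (n + 10) = cfTail gapStartSeq n := fun n =>
    cfTail_add_of_periodic fun i => by unfold gapStartSeq; congr 1; simp only [eq_iff_iff]; omega
  have pY : ∀ n, cfTail (reversal gapStartSeq) (n + 10) = cfTail (reversal gapStartSeq) n :=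
    fun n => cfTail_add_of_periodic fun i => by
      unfold reversal gapStartSeq; congr 1; simp only [eq_iff_iff]; omega
  have hX' : ∀ n : ℤ, n % 10 = 0 →
      cfTail gapStartSeq n = tailP ∧ cfTail gapStartSeq (n + 6) = tailQ := by
    intro n hn
    apply hX.eq_tailP_and_eq_tailQ _ _ _ _ _ _ _ _ _ _ (pX n) <;> unfold gapStartSeq <;> grind
  have hY' : ∀ n : ℤ, n % 10 = 4 → cfTail (reversal gapStartSeq) n = tailP ∧
      cfTail (reversal gapStartSeq) (n + 6) = tailQ := by
    intro n hn
    apply hY.eq_tailP_and_eq_tailQ _ _ _ _ _ _ _ _ _ _ (pY n) <;>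
      unfold reversal gapStartSeq <;> grind
  rw [lambdaVal_eq_sub (pos_of_digits gapStartSeq_digits), hk, ← tailP_add_tailQ]
  have hk' : k % 10 = 0 ∨ k % 10 = 6 := by
    unfold gapStartSeq at hk
    by_contra hc
    rw [if_neg hc] at hk
    omega
  rcases hk' with hk | hk
  · have y := (hY' (-k - 6) (by omega)).2
    rw [sub_add_cancel] at y
    rw [(hX' k hk).1, y]
    norm_num
  · have x := (hX' (k - 6) (by omega)).2
    rw [sub_add_cancel] at x
    rw [x, (hY' (-k) (by omega)).1]
    push_cast
    ring

theorem gapStart_mem_markovSpectrum : √66045 / 79 ∈ markovSpectrum := by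
  refine ⟨gapStartSeq, pos_of_digits gapStartSeq_digits,
    markovValue_eq_of_le (k := 0) (fun k => ?_) (lambdaVal_gapStartSeq (by simp [gapStartSeq]))⟩
  rcases gapStartSeq_digits k with h | h
  · linarith [lambdaVal_le_of_one gapStartSeq_digits h, lt_gapStart]
  · exact (lambdaVal_gapStartSeq h).le

/-- The symmetric sequence with right half `2, 1, 1, 1` followed by the period `2, 2, 1, 2`. -/
def gapEndSeq (n : ℤ) : ℕ :=
  if n = 0 then 2 else if n.natAbs ≤ 3 then 1 else if n.natAbs % 4 = 2 then 1 else 2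

theorem gapEndSeq_digits (n : ℤ) : gapEndSeq n = 1 ∨ gapEndSeq n = 2 := by
  unfold gapEndSeq
  split_ifs <;> simp

theorem reversal_gapEndSeq : reversal gapEndSeq = gapEndSeq := by
  funext n
  simp [reversal, gapEndSeq]

theorem cfTail_gapEndSeq_four : cfTail gapEndSeq 4 = tailR := by
  have h := isTails_cfTail gapEndSeq_digits
  have hp : cfTail gapEndSeq (4 + 4) = cfTail gapEndSeq 4 :=
    cfTail_add_of_periodic fun i => by unfold gapEndSeq; split_ifs <;> omega
  have e4 := h.eq_of_two (k := 4) (by decide)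
  have e5 := h.eq_of_two (k := 5) (by decide)
  have e6 := h.eq_of_one (k := 6) (by decide)
  have e7 := h.eq_of_two (k := 7) (by decide)
  norm_num only at e4 e5 e6 e7 hp
  have hb := h.one_le 4
  rw [hp] at e7
  rw [e5, e6, e7] at e4
  rw [two_two_one_two (by linarith), eq_div_iff (by linarith)] at e4
  have f : (cfTail gapEndSeq 4 - tailR) * (8 * (cfTail gapEndSeq 4 + tailR) - 16) = 0 := by
    linarith [tailR_quadratic]
  rcases mul_eq_zero.mp f with f | f
  · linarith
  · linarith [tailR_bounds.1]

theorem gapEnd_mem_markovSpectrum : (190 + 4 * √30) / 65 ∈ markovSpectrum := by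
  have h := isTails_cfTail gapEndSeq_digits
  have h0 : lambdaVal gapEndSeq 0 = (190 + 4 * √30) / 65 := by
    rw [lambdaVal_eq_sub (pos_of_digits gapEndSeq_digits), reversal_gapEndSeq, neg_zero,
      h.eq_of_two_one_one_one (k := 0) (by decide) (by decide) (by decide) (by decide), zero_add,
      cfTail_gapEndSeq_four, ← two_mul_tailR_value, show gapEndSeq 0 = 2 by decide]
    push_cast
    ring
  refine ⟨gapEndSeq, pos_of_digits gapEndSeq_digits,
    markovValue_eq_of_le (k := 0) (fun k => ?_) h0⟩
  have hU := sqrt_thirty_bounds.1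
  rcases eq_or_ne k 0 with rfl | hk0
  · exact h0.le
  rcases gapEndSeq_digits k with hk | hk
  · linarith [lambdaVal_le_of_one gapEndSeq_digits hk]
  · have : gapEndSeq (k + 1) = 2 ∨ gapEndSeq (k - 1) = 2 := by
      unfold gapEndSeq at hk ⊢
      split_ifs at hk ⊢ <;> omega
    linarith [lambdaVal_le_of_two_two gapEndSeq_digits hk this]

/-- The open interval is a gap of the Markov spectrum: the spectrum misses the
open interval, while both endpoints belong to it. -/
theorem markov_gap_11 :
    markovSpectrum ∩ Ioo (Real.sqrt 66045 / 79) ((190 + 4 * Real.sqrt 30) / 65) = ∅ ∧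
    (Real.sqrt 66045 / 79) ∈ markovSpectrum ∧ ((190 + 4 * Real.sqrt 30) / 65) ∈ markovSpectrum := by
  refine ⟨?_, gapStart_mem_markovSpectrum, gapEnd_mem_markovSpectrum⟩
  rw [eq_empty_iff_forall_notMem]
  rintro _ ⟨⟨α, hα, hb, rfl⟩, hlo, hhi⟩
  have hlt : ∀ k, lambdaVal α k < (190 + 4 * √30) / 65 := fun k => (le_ciSup hb k).trans_lt hhi
  have hgood : IsBelowGapEnd α :=
    ⟨digits_of_lambdaVal_lt hα fun k => (hlt k).trans (by linarith [gapEnd_lt]), hlt⟩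
  exact absurd (ciSup_le hgood.lambdaVal_le) (not_le.mpr hlo)
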